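/- Define 𝒞_{m,n} = ℒ_m + ℛ_n − 𝒜_{m,n} + Nn as an endomorphism of V^{m,n}. Then for every tensor T in the isotypic GL(N)-component of V^{m,n} labelled by (μ,ν) ∈ Λ_{m,n}(N), one has 𝒞_{m,n}(T) = (c(μ) + c(ν) + N|ν|)·T. -/

import Mathlib

open scoped BigOperators

noncomputable section

/-- Mixed tensors of valence (m,n) on an N-dimensional space, given by components. -/
abbrev Tens (N m n : ℕ) := (Fin m → Fin N) → (Fin n → Fin N) → ℂ

namespace Mixed

variable (N : ℕ)

/-- Permutation of the contravariant (V) factors. -/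
def permU (m n : ℕ) (p : Equiv.Perm (Fin m)) : Module.End ℂ (Tens N m n) where
  toFun t := fun i j => t (i ∘ p) j
  map_add' t s := rfl
  map_smul' c t := rfl

/-- Permutation of the covariant (V*) factors. -/
def permD (m n : ℕ) (q : Equiv.Perm (Fin n)) : Module.End ℂ (Tens N m n) where
  toFun t := fun i j => t i (j ∘ q)
  map_add' t s := rfl
  map_smul' c t := rfl

/-- The contraction map `tr_{ab'}` (the result, a tensor of valence (m−1,n−1), is
recorded as a function not depending on the slots a, b). -/
def ctr (m n : ℕ) (a : Fin m) (b : Fin n) : Tens N m n →ₗ[ℂ] Tens N m n where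
  toFun t := fun i j => ∑ k : Fin N,
    t (Function.update i a k) (Function.update j b k)
  map_add' t s := by funext i j; simp [Finset.sum_add_distrib]
  map_smul' c t := by funext i j; simp [Finset.mul_sum]

/-- The contraction-insertion endomorphism `τ_{ab'} = tr⁺_{ab'} ∘ tr_{ab'}`. -/
def tauC (m n : ℕ) (a : Fin m) (b : Fin n) : Module.End ℂ (Tens N m n) where
  toFun t := fun i j =>
    if i a = j b then
      ∑ k : Fin N, t (Function.update i a k) (Function.update j b k)
    else 0
  map_add' t s := by
    funext i j; by_cases h : i a = j b <;> simp [h, Finset.sum_add_distrib]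
  map_smul' c t := by
    funext i j; by_cases h : i a = j b <;> simp [h, Finset.mul_sum]

/-- `𝒜_{m,n} = ∑_{a,b'} τ_{ab'}`. -/
def A (m n : ℕ) : Module.End ℂ (Tens N m n) :=
  ∑ a : Fin m, ∑ b : Fin n, tauC N m n a b

/-- The traceless subspace: common kernel of all contractions. -/
def traceless0 (m n : ℕ) : Submodule ℂ (Tens N m n) :=
  ⨅ a : Fin m, ⨅ b : Fin n, LinearMap.ker (ctr N m n a b)

/-- `ℒ_m`: the sum of the transpositions of the V-factors. -/
def LOp (m n : ℕ) : Module.End ℂ (Tens N m n) :=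
  ∑ x ∈ Finset.univ.filter (fun x : Fin m × Fin m => x.1 < x.2),
    permU N m n (Equiv.swap x.1 x.2)

/-- `ℛ_n`: the sum of the transpositions of the V*-factors. -/
def ROp (m n : ℕ) : Module.End ℂ (Tens N m n) :=
  ∑ x ∈ Finset.univ.filter (fun x : Fin n × Fin n => x.1 < x.2),
    permD N m n (Equiv.swap x.1 x.2)

/-- The (diagonal) action of GL(N) on mixed tensors: the contragredient action on
the covariant indices. -/
def glAct (m n : ℕ) (g : GL (Fin N) ℂ) : Module.End ℂ (Tens N m n) where
  toFun t := fun i j => ∑ i' : Fin m → Fin N, ∑ j' : Fin n → Fin N,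
    ((∏ a : Fin m, (g : Matrix (Fin N) (Fin N) ℂ) (i a) (i' a)) *
      ∏ b : Fin n, ((g⁻¹ : GL (Fin N) ℂ) : Matrix (Fin N) (Fin N) ℂ) (j' b) (j b)) *
        t i' j'
  map_add' t s := by
    funext i j
    simp only [Pi.add_apply, mul_add, Finset.sum_add_distrib]
  map_smul' c t := by
    funext i j
    simp only [Pi.smul_apply, smul_eq_mul, RingHom.id_apply, Finset.mul_sum]
    refine Finset.sum_congr rfl fun i' _ => Finset.sum_congr rfl fun j' _ => by ring

/-- The centraliser algebra `C_{m,n}(N) = End_{GL(N)}(V^{m,n})`. -/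
def Cent (m n : ℕ) : Subalgebra ℂ (Module.End ℂ (Tens N m n)) :=
  Subalgebra.centralizer ℂ (Set.range (glAct N m n))

end Mixed

attribute [local instance] Classical.propDecidable

namespace Mixed

/-- The total content c(ρ) = ∑_{(i,j)∈ρ} (j − i) of a Young diagram. -/
def content (ρ : YoungDiagram) : ℤ :=
  ∑ c ∈ ρ.cells, ((c.2 : ℤ) - (c.1 : ℤ))

/-- The number of rows ℓ(ρ) of a Young diagram. -/
def nrows (ρ : YoungDiagram) : ℕ := (ρ.cells.image Prod.fst).card

/-- A (bijective) filling of the cells of ρ by {0, …, m−1}. -/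
def IsTableau (m : ℕ) (ρ : YoungDiagram) (f : Fin m → ℕ × ℕ) : Prop :=
  Function.Injective f ∧ Set.range f = ↑ρ.cells

/-- p preserves the rows of the filling f. -/
def rowPres {m : ℕ} (f : Fin m → ℕ × ℕ) (p : Equiv.Perm (Fin m)) : Prop :=
  ∀ x, (f (p x)).1 = (f x).1

/-- q preserves the columns of the filling f. -/
def colPres {m : ℕ} (f : Fin m → ℕ × ℕ) (q : Equiv.Perm (Fin m)) : Prop :=
  ∀ x, (f (q x)).2 = (f x).2

/-- The Young symmetriser c_λ = ∑_{p ∈ Row, q ∈ Col} sgn(q)·pq acting on the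
contravariant factors. -/
def ySymU (N m n : ℕ) (f : Fin m → ℕ × ℕ) : Module.End ℂ (Tens N m n) :=
  ∑ p : Equiv.Perm (Fin m), ∑ q : Equiv.Perm (Fin m),
    if rowPres f p ∧ colPres f q then
      (((Equiv.Perm.sign q : ℤ) : ℂ)) • permU N m n (p * q)
    else 0

/-- The Young symmetriser acting on the covariant factors. -/
def ySymD (N m n : ℕ) (f : Fin n → ℕ × ℕ) : Module.End ℂ (Tens N m n) :=
  ∑ p : Equiv.Perm (Fin n), ∑ q : Equiv.Perm (Fin n),
    if rowPres f p ∧ colPres f q then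
      (((Equiv.Perm.sign q : ℤ) : ℂ)) • permD N m n (p * q)
    else 0

/-- The isotypic GL(N)×GL(N)-component of `V^{m,n}` labelled by the pair of
partitions (ρ,σ): the ℂ[𝔖_m×𝔖_n]-submodule generated by the images of the Young
symmetrisers of shapes ρ and σ. -/
def glglComp (N m n : ℕ) (ρ σ : YoungDiagram) : Submodule ℂ (Tens N m n) :=
  Submodule.span ℂ {x | ∃ (fρ : Fin m → ℕ × ℕ) (fσ : Fin n → ℕ × ℕ),
    IsTableau m ρ fρ ∧ IsTableau n σ fσ ∧
    ∃ (p : Equiv.Perm (Fin m)) (q : Equiv.Perm (Fin n)) (t : Tens N m n),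
      x = permU N m n p (permD N m n q (ySymU N m n fρ (ySymD N m n fσ t)))}

end Mixed

namespace Mixed

/-- The GL(N)-equivariant embedding `V^{m-r,n-r} ⊗ E^{⊗r} ↪ V^{m,n}` obtained by
tensoring with r copies of the identity tensor E = ∑ᵢ eᵢ ⊗ eⁱ placed in the last
r contravariant and covariant slots. -/
def embE (N m n r : ℕ) (hrm : r ≤ m) (hrn : r ≤ n) :
    Tens N (m - r) (n - r) →ₗ[ℂ] Tens N m n where
  toFun t := fun i j =>
    (∏ s : Fin r,
      if i ⟨m - r + s.1, by have := s.2; omega⟩ = j ⟨n - r + s.1, by have := s.2; omega⟩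
      then (1 : ℂ) else 0) *
    t (fun x => i (Fin.castLE (Nat.sub_le m r) x)) (fun y => j (Fin.castLE (Nat.sub_le n r) y))
  map_add' t s := by funext i j; simp [mul_add]
  map_smul' c t := by funext i j; simp; ring

/-- The isotypic GL(N)-component of `V^{m,n}` labelled by the pair of partitions
(μ,ν) with m − |μ| = n − |ν| = r: the C_{m,n}(N)-submodule generated by the
embeddings `W ⊗ E^{⊗r}` of the Young-symmetrised traceless tensors
W ⊆ V₀^{m-r,n-r} of symmetry type (μ,ν). -/
def glIsoComp (N m n r : ℕ) (hrm : r ≤ m) (hrn : r ≤ n) (μ ν : YoungDiagram) :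
    Submodule ℂ (Tens N m n) :=
  Submodule.span ℂ {x | ∃ f ∈ Cent N m n,
    ∃ (fμ : Fin (m - r) → ℕ × ℕ) (fν : Fin (n - r) → ℕ × ℕ),
      IsTableau (m - r) μ fμ ∧ IsTableau (n - r) ν fν ∧
      ∃ t ∈ traceless0 N (m - r) (n - r),
        x = f (embE N m n r hrm hrn
          (ySymU N (m - r) (n - r) fμ (ySymD N (m - r) (n - r) fν t)))}

end Mixed

/-!
The operator `2 𝒞_{m,n} + N (m - n)` is the quadratic Casimir operator `∑ E_pq E_qp` of `𝔤𝔩_N`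
acting on `V^{m,n}`: expanding the products slot by slot, two different slots of the same kind
produce their transposition, two slots of opposite kind minus their contraction-insertion operator,
and a single slot the scalar `N`. Differentiating the `GL(N)`-action, every `GL(N)`-endomorphism of
`V^{m,n}` commutes with `𝔤𝔩_N`, hence with `𝒞_{m,n}`. As `𝔤𝔩_N` annihilates `E^{⊗r}`, the Leibniz
rule shows that `T ↦ T ⊗ E^{⊗r}` intertwines the quadratic Casimir operators of `V^{m-r,n-r}` and
`V^{m,n}`, and therefore `𝒞_{m-r,n-r}` and `𝒞_{m,n}`. This leaves the Young-symmetrised traceless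
tensors in `V^{m-r,n-r}`, on which `𝒜` vanishes while `ℒ` and `ℛ` act by the contents `c(μ)` and
`c(ν)`: between the row symmetriser and the column antisymmetriser of a tableau, a transposition
acts as `1`, `-1` or `0` according to whether its entries share a row, a column or neither.
-/

namespace Mixed

section PairSums

variable {α M : Type*} [Fintype α] [AddCommMonoid M]

theorem sum_diag_add_sum_offDiag (F : α → α → M) :
    ∑ a, F a a + ∑ x ∈ Finset.univ.offDiag, F x.1 x.2 = ∑ a, ∑ b, F a b := by
  rw [← Finset.sum_product', ← Finset.diag_union_offDiag,
    Finset.sum_union (Finset.disjoint_diag_offDiag _), Finset.sum_diag]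

theorem sum_lt_add_swap [LinearOrder α] [DecidableLT α] (F : α → α → M) :
    ∑ x : α × α with x.1 < x.2, (F x.1 x.2 + F x.2 x.1) =
      ∑ x ∈ Finset.univ.offDiag, F x.1 x.2 := by
  rw [Finset.sum_add_distrib,
    ← Finset.sum_filter_add_sum_filter_not Finset.univ.offDiag (fun x => x.1 < x.2)]
  congr 1
  · refine Finset.sum_congr ?_ fun _ _ => rfl
    ext x
    simpa using fun h : x.1 < x.2 => h.ne
  · refine Finset.sum_equiv (Equiv.prodComm α α) (fun x => ?_) fun _ _ => rfl
    suffices x.1 < x.2 ↔ x.2 ≠ x.1 ∧ x.1 ≤ x.2 by simpa using this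
    rw [lt_iff_le_and_ne, ne_comm, and_comm]

end PairSums

section CharacterSums

variable {G R : Type*} [Group G] [Fintype G] [Ring R]

/-- The sum `∑_{g ∈ H} χ(g) ρ(g)` of a subgroup `H`, weighted by a sign character `χ`, in a
representation `ρ`. For `χ = 1` this symmetrises over `H`, for `χ = sign` it antisymmetrises. -/
def charSum (ρ : G →* R) (χ : G →* ℤˣ) (H : Subgroup G) : R :=
  ∑ g with g ∈ H, χ g • ρ g

variable (ρ : G →* R) (χ : G →* ℤˣ) {H : Subgroup G} {h : G}

theorem charSum_mul_of_mem (hh : h ∈ H) : charSum ρ χ H * ρ h = χ h • charSum ρ χ H := by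
  rw [charSum, Finset.sum_mul, Finset.smul_sum]
  refine Finset.sum_equiv (Equiv.mulRight h) (fun g => ?_) fun g _ => ?_
  · simp [H.mul_mem_cancel_right hh]
  · rw [Equiv.coe_mulRight, map_mul, map_mul, smul_smul, mul_comm (χ g), ← mul_assoc,
      Int.units_mul_self, one_mul, smul_mul_assoc]

theorem mul_charSum_of_mem (hh : h ∈ H) : ρ h * charSum ρ χ H = χ h • charSum ρ χ H := by
  rw [charSum, Finset.mul_sum, Finset.smul_sum]
  refine Finset.sum_equiv (Equiv.mulLeft h) (fun g => ?_) fun g _ => ?_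
  · simp [H.mul_mem_cancel_left hh]
  · rw [Equiv.coe_mulLeft, map_mul, map_mul, smul_smul, ← mul_assoc,
      Int.units_mul_self, one_mul, mul_smul_comm]

theorem commute_charSum {ρ : G →* R} {x : R} (hx : ∀ g, Commute x (ρ g)) (χ : G →* ℤˣ)
    (H : Subgroup G) : Commute x (charSum ρ χ H) :=
  Commute.sum_right _ _ _ fun g _ => (hx g).smul_right (χ g)

end CharacterSums

section YoungSymmetrizers

variable {m : ℕ} {R : Type*} [Ring R]

/-- The row stabiliser of the filling `f`. -/
def rowStabilizer (f : Fin m → ℕ × ℕ) : Subgroup (Equiv.Perm (Fin m)) where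
  carrier := {p | rowPres f p}
  one_mem' _ := rfl
  mul_mem' hp hq x := (hp _).trans (hq x)
  inv_mem' {p} hp x := by simpa using (hp (p⁻¹ x)).symm

/-- The column stabiliser of the filling `f`. -/
def colStabilizer (f : Fin m → ℕ × ℕ) : Subgroup (Equiv.Perm (Fin m)) where
  carrier := {q | colPres f q}
  one_mem' _ := rfl
  mul_mem' hp hq x := (hp _).trans (hq x)
  inv_mem' {p} hp x := by simpa using (hp (p⁻¹ x)).symm

theorem swap_mem_rowStabilizer {f : Fin m → ℕ × ℕ} {x y : Fin m} (h : (f x).1 = (f y).1) :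
    Equiv.swap x y ∈ rowStabilizer f := by
  intro z
  rw [Equiv.swap_apply_def]
  split_ifs with hx hy <;> simp [*]

theorem swap_mem_colStabilizer {f : Fin m → ℕ × ℕ} {x y : Fin m} (h : (f x).2 = (f y).2) :
    Equiv.swap x y ∈ colStabilizer f := by
  intro z
  rw [Equiv.swap_apply_def]
  split_ifs with hx hy <;> simp [*]

/-- The Young symmetriser of the filling `f` in a representation `ρ` of the symmetric group: the
row symmetriser times the column antisymmetriser. -/
def youngSymmetrizer (ρ : Equiv.Perm (Fin m) →* R) (f : Fin m → ℕ × ℕ) : R :=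
  charSum ρ 1 (rowStabilizer f) * charSum ρ Equiv.Perm.sign (colStabilizer f)

theorem youngSymmetrizer_eq_sum {K : Type*} [CommRing K] [Algebra K R]
    (ρ : Equiv.Perm (Fin m) →* R) (f : Fin m → ℕ × ℕ) :
    youngSymmetrizer ρ f = ∑ p : Equiv.Perm (Fin m), ∑ q : Equiv.Perm (Fin m),
      if rowPres f p ∧ colPres f q then ((Equiv.Perm.sign q : ℤ) : K) • ρ (p * q) else 0 := by
  simp only [youngSymmetrizer, charSum, Finset.sum_filter, Finset.sum_mul_sum]
  refine Finset.sum_congr rfl fun p _ => Finset.sum_congr rfl fun q _ => ?_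
  change (if rowPres f p then _ else _) * (if colPres f q then _ else _) = _
  simp only [MonoidHom.one_apply, one_smul, ite_zero_mul_ite_zero, Units.smul_def, mul_smul_comm,
    ← map_mul, Int.cast_smul_eq_zsmul]

theorem commute_youngSymmetrizer {ρ : Equiv.Perm (Fin m) →* R} {x : R}
    (hx : ∀ p, Commute x (ρ p)) (f : Fin m → ℕ × ℕ) : Commute x (youngSymmetrizer ρ f) :=
  (commute_charSum hx _ _).mul_right (commute_charSum hx _ _)

/-- The sum of all transpositions in a representation `ρ` of the symmetric group. -/
def transpositionSum (ρ : Equiv.Perm (Fin m) →* R) : R :=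
  ∑ x : Fin m × Fin m with x.1 < x.2, ρ (Equiv.swap x.1 x.2)

theorem sum_offDiag_swap (ρ : Equiv.Perm (Fin m) →* R) :
    ∑ x ∈ Finset.univ.offDiag, ρ (Equiv.swap x.1 x.2) = 2 • transpositionSum ρ := by
  rw [← sum_lt_add_swap fun x y => ρ (Equiv.swap x y), transpositionSum, Finset.smul_sum]
  refine Finset.sum_congr rfl fun x _ => ?_
  rw [Equiv.swap_comm x.2, two_nsmul]

theorem commute_transpositionSum [IsAddTorsionFree R] (ρ : Equiv.Perm (Fin m) →* R)
    (p : Equiv.Perm (Fin m)) : Commute (transpositionSum ρ) (ρ p) := by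
  suffices h : Commute (2 • transpositionSum ρ) (ρ p) by
    refine nsmul_right_injective two_ne_zero ?_
    simpa only [Commute, SemiconjBy, smul_mul_assoc, mul_smul_comm] using h
  rw [← sum_offDiag_swap, Commute, SemiconjBy, Finset.sum_mul, Finset.mul_sum]
  refine (Finset.sum_equiv (p.prodCongr p) (fun x => by simp) fun x _ => ?_).symm
  simp only [Equiv.prodCongr_apply, Prod.map_fst, Prod.map_snd]
  rw [← map_mul, ← map_mul, Equiv.swap_apply_apply, inv_mul_cancel_right]

/-- For distinct cells `c`, `d` of a tableau, the scalar by which the transposition of their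
entries acts between the row symmetriser and the column antisymmetriser: `1` if the cells share a
row, `-1` if they share a column, `0` otherwise. -/
def swapWeight (c d : ℕ × ℕ) : ℤ :=
  (if c.1 = d.1 then 1 else 0) - if c.2 = d.2 then 1 else 0

/-- A one-sided version of `swapWeight`: `1` if `d` lies to the left of `c` in its row, `-1` if `d`
lies above `c` in its column, `0` otherwise. Summed over the cells `d` of a Young diagram it is the
content of `c`. -/
def leftSubAbove (c d : ℕ × ℕ) : ℤ :=
  (if d.1 = c.1 ∧ d.2 < c.2 then 1 else 0) - if d.2 = c.2 ∧ d.1 < c.1 then 1 else 0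

theorem leftSubAbove_self (c : ℕ × ℕ) : leftSubAbove c c = 0 := by
  simp [leftSubAbove]

theorem leftSubAbove_add_swap {c d : ℕ × ℕ} (h : c ≠ d) :
    leftSubAbove c d + leftSubAbove d c = swapWeight c d := by
  have : ¬(c.1 = d.1 ∧ c.2 = d.2) := fun e => h (Prod.ext e.1 e.2)
  unfold leftSubAbove swapWeight
  split_ifs <;> omega

theorem card_filter_left {μ : YoungDiagram} {c : ℕ × ℕ} (hc : c ∈ μ.cells) :
    (μ.cells.filter fun d => d.1 = c.1 ∧ d.2 < c.2).card = c.2 := by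
  have left_cells : (μ.cells.filter fun d => d.1 = c.1 ∧ d.2 < c.2) =
      {c.1} ×ˢ Finset.range c.2 := by
    ext d
    simp only [Finset.mem_filter, Finset.mem_product, Finset.mem_singleton, Finset.mem_range,
      and_iff_right_iff_imp]
    exact fun h => μ.isLowerSet (a := c) ⟨h.1.le, h.2.le⟩ hc
  rw [left_cells, Finset.card_product, Finset.card_singleton, one_mul, Finset.card_range]

theorem card_filter_above {μ : YoungDiagram} {c : ℕ × ℕ} (hc : c ∈ μ.cells) :
    (μ.cells.filter fun d => d.2 = c.2 ∧ d.1 < c.1).card = c.1 := by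
  have above_cells : (μ.cells.filter fun d => d.2 = c.2 ∧ d.1 < c.1) =
      Finset.range c.1 ×ˢ {c.2} := by
    ext d
    simp only [Finset.mem_filter, Finset.mem_product, Finset.mem_singleton, Finset.mem_range,
      and_comm (a := d.1 < c.1), and_iff_right_iff_imp]
    exact fun h => μ.isLowerSet (a := c) ⟨h.2.le, h.1.le⟩ hc
  rw [above_cells, Finset.card_product, Finset.card_singleton, mul_one, Finset.card_range]

theorem sum_cells_leftSubAbove (μ : YoungDiagram) :
    ∑ c ∈ μ.cells, ∑ d ∈ μ.cells, leftSubAbove c d = content μ := by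
  refine Finset.sum_congr rfl fun c hc => ?_
  simp only [leftSubAbove, Finset.sum_sub_distrib, Finset.sum_boole]
  rw [card_filter_left hc, card_filter_above hc]

variable {f : Fin m → ℕ × ℕ} {μ : YoungDiagram}

theorem IsTableau.image_eq_cells (hf : IsTableau m μ f) : Finset.univ.image f = μ.cells :=
  Finset.coe_injective (by simpa using hf.2)

theorem IsTableau.sum_eq_sum_cells {M : Type*} [AddCommMonoid M] (hf : IsTableau m μ f)
    (F : ℕ × ℕ → M) : ∑ x, F (f x) = ∑ c ∈ μ.cells, F c := by
  rw [← hf.image_eq_cells, Finset.sum_image hf.1.injOn]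

theorem IsTableau.card_eq (hf : IsTableau m μ f) : μ.card = m := by
  rw [YoungDiagram.card, ← hf.image_eq_cells, Finset.card_image_of_injective _ hf.1,
    Finset.card_fin]

theorem IsTableau.exists_eq_of_le (hf : IsTableau m μ f) {c : ℕ × ℕ} {y : Fin m} (hc : c ≤ f y) :
    ∃ z, f z = c := by
  have hlower : IsLowerSet (Set.range f) := hf.2 ▸ μ.isLowerSet
  exact hlower hc (Set.mem_range_self y)

theorem IsTableau.sum_swapWeight (hf : IsTableau m μ f) :
    ∑ x : Fin m × Fin m with x.1 < x.2, swapWeight (f x.1) (f x.2) = content μ := calc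
  _ = ∑ x : Fin m × Fin m with x.1 < x.2,
        (leftSubAbove (f x.1) (f x.2) + leftSubAbove (f x.2) (f x.1)) :=
      Finset.sum_congr rfl fun x hx =>
        (leftSubAbove_add_swap (hf.1.ne (Finset.mem_filter.1 hx).2.ne)).symm
  _ = ∑ x, ∑ y, leftSubAbove (f x) (f y) := by
      rw [sum_lt_add_swap fun x y => leftSubAbove (f x) (f y), ← sum_diag_add_sum_offDiag]
      simp only [leftSubAbove_self, Finset.sum_const_zero, zero_add]
  _ = content μ := by
      simp only [hf.sum_eq_sum_cells (leftSubAbove _)]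
      rw [hf.sum_eq_sum_cells fun c => ∑ d ∈ μ.cells, leftSubAbove c d, sum_cells_leftSubAbove]

variable [IsAddTorsionFree R] (ρ : Equiv.Perm (Fin m) →* R)

-- The entry `z` in the row of `x` and the column of `y` makes the product equal to its negative.
theorem IsTableau.rowSum_mul_swap_mul_colSum_eq_zero (hf : IsTableau m μ f) {x y : Fin m}
    (hrow : (f x).1 < (f y).1) (hcol : (f x).2 ≠ (f y).2) :
    charSum ρ 1 (rowStabilizer f) * ρ (Equiv.swap x y) *
      charSum ρ Equiv.Perm.sign (colStabilizer f) = 0 := by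
  obtain ⟨z, hz⟩ := hf.exists_eq_of_le (c := ((f x).1, (f y).2)) ⟨hrow.le, le_rfl⟩
  have hz_row : (f z).1 = (f x).1 := by rw [hz]
  have hz_col : (f z).2 = (f y).2 := by rw [hz]
  have hzx : z ≠ x := by rintro rfl; exact hcol hz_col
  have hzy : z ≠ y := by rintro rfl; exact hrow.ne' hz_row
  have swap_conj : Equiv.swap z x * Equiv.swap x y = Equiv.swap x y * Equiv.swap z y := by
    rw [Equiv.mul_swap_eq_swap_mul (Equiv.swap x y), Equiv.swap_apply_of_ne_of_ne hzx hzy,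
      Equiv.swap_apply_right]
  rw [← self_eq_neg]
  calc
    _ = charSum ρ 1 (rowStabilizer f) * ρ (Equiv.swap z x) * ρ (Equiv.swap x y) *
          charSum ρ Equiv.Perm.sign (colStabilizer f) := by
        rw [charSum_mul_of_mem ρ 1 (swap_mem_rowStabilizer hz_row), MonoidHom.one_apply, one_smul]
    _ = charSum ρ 1 (rowStabilizer f) * ρ (Equiv.swap x y) *
          (ρ (Equiv.swap z y) * charSum ρ Equiv.Perm.sign (colStabilizer f)) := by
        simp only [mul_assoc, ← map_mul ρ, ← mul_assoc (ρ _), swap_conj]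
    _ = _ := by
        rw [mul_charSum_of_mem ρ _ (swap_mem_colStabilizer hz_col),
          Equiv.Perm.sign_swap hzy, Units.neg_smul, one_smul, mul_neg]

theorem IsTableau.rowSum_mul_swap_mul_colSum (hf : IsTableau m μ f) {x y : Fin m} (hxy : x ≠ y) :
    charSum ρ 1 (rowStabilizer f) * ρ (Equiv.swap x y) *
      charSum ρ Equiv.Perm.sign (colStabilizer f) =
        swapWeight (f x) (f y) • youngSymmetrizer ρ f := by
  by_cases hrow : (f x).1 = (f y).1
  · have hcol : (f x).2 ≠ (f y).2 := fun h => hf.1.ne hxy (Prod.ext hrow h)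
    rw [charSum_mul_of_mem ρ 1 (swap_mem_rowStabilizer hrow)]
    simp [swapWeight, hrow, hcol, youngSymmetrizer]
  by_cases hcol : (f x).2 = (f y).2
  · rw [mul_assoc, mul_charSum_of_mem ρ _ (swap_mem_colStabilizer hcol), Equiv.Perm.sign_swap hxy]
    simp [swapWeight, hrow, hcol, youngSymmetrizer]
  · rw [swapWeight, if_neg hrow, if_neg hcol, sub_zero, zero_smul]
    rcases lt_or_gt_of_ne hrow with h | h
    · exact hf.rowSum_mul_swap_mul_colSum_eq_zero ρ h hcol
    · rw [Equiv.swap_comm]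
      exact hf.rowSum_mul_swap_mul_colSum_eq_zero ρ h (Ne.symm hcol)

theorem IsTableau.transpositionSum_mul_youngSymmetrizer (hf : IsTableau m μ f) :
    transpositionSum ρ * youngSymmetrizer ρ f = content μ • youngSymmetrizer ρ f := by
  have transpositionSum_comm := commute_charSum (commute_transpositionSum ρ) 1 (rowStabilizer f)
  conv_lhs => rw [youngSymmetrizer, ← mul_assoc, transpositionSum_comm.eq, transpositionSum,
    Finset.mul_sum, Finset.sum_mul]
  rw [← hf.sum_swapWeight, Finset.sum_smul]
  exact Finset.sum_congr rfl fun x hx =>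
    hf.rowSum_mul_swap_mul_colSum ρ (Finset.mem_filter.1 hx).2.ne

end YoungSymmetrizers

section SlotOperators

variable {ι κ R M : Type*} [CommRing R] [AddCommGroup M] [Module R M]

/-- The action of permutations on tensors with slots `ι`, indices `κ` and components in `M`. Taking
`M` to be a space of tensors itself gives the action on a first group of slots. -/
def permSlots : Equiv.Perm ι →* Module.End R ((ι → κ) → M) where
  toFun σ := LinearMap.funLeft R M fun i => i ∘ σ
  map_one' := rfl
  map_mul' _ _ := rfl

theorem permSlots_apply (σ : Equiv.Perm ι) (t : (ι → κ) → M) (i : ι → κ) :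
    permSlots (R := R) σ t i = t (i ∘ σ) := rfl

/-- An endomorphism of `M` acting on the values of functions with values in `M`; for tensors with
components in a space of tensors, this is the action on the second group of slots. -/
def onValues {α : Type*} : Module.End R M →+* Module.End R (α → M) where
  toFun D := D.compLeft α
  map_one' := rfl
  map_mul' _ _ := rfl
  map_zero' := rfl
  map_add' _ _ := rfl

theorem onValues_apply {α : Type*} (D : Module.End R M) (t : α → M) (i : α) :
    onValues D t i = D (t i) := rfl

theorem commute_permSlots_onValues (σ : Equiv.Perm ι) (D : Module.End R M) :
    Commute (permSlots (κ := κ) σ) (onValues D) := rfl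

section MatrixAction

variable [DecidableEq ι] [Fintype κ]

/-- The matrix `X` acting on the slot `a` of a tensor. -/
def atSlot (a : ι) (X : Matrix κ κ R) : Module.End R ((ι → κ) → M) where
  toFun t i := ∑ k, X (i a) k • t (Function.update i a k)
  map_add' s t := by
    funext i
    simp only [Pi.add_apply, smul_add, Finset.sum_add_distrib]
  map_smul' c t := by
    funext i
    simp only [Pi.smul_apply, RingHom.id_apply, Finset.smul_sum, smul_comm c]

theorem atSlot_apply (a : ι) (X : Matrix κ κ R) (t : (ι → κ) → M) (i : ι → κ) :
    atSlot a X t i = ∑ k, X (i a) k • t (Function.update i a k) := rfl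

variable [Fintype ι]

/-- The derivation action of a matrix on tensors, i.e. the differential of `tensorPower` at `1`. -/
def lieAct (X : Matrix κ κ R) : Module.End R ((ι → κ) → M) := ∑ a, atSlot a X

theorem lieAct_apply (X : Matrix κ κ R) (t : (ι → κ) → M) (i : ι → κ) :
    lieAct X t i = ∑ a, ∑ k, X (i a) k • t (Function.update i a k) := by
  simp only [lieAct, LinearMap.sum_apply, Finset.sum_apply, atSlot_apply]

theorem lieAct_neg (X : Matrix κ κ R) : lieAct (ι := ι) (M := M) (-X) = -lieAct X := by
  refine LinearMap.ext fun t => funext fun i => ?_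
  simp only [LinearMap.neg_apply, Pi.neg_apply, lieAct_apply, Matrix.neg_apply, neg_smul,
    Finset.sum_neg_distrib]

theorem commute_lieAct_permSlots (X : Matrix κ κ R) (σ : Equiv.Perm ι) :
    Commute (lieAct (M := M) X) (permSlots σ) := by
  refine LinearMap.ext fun t => funext fun i => ?_
  simp only [Module.End.mul_apply, permSlots_apply, lieAct_apply]
  rw [← Equiv.sum_comp σ]
  simp only [Function.update_comp_eq_of_injective i σ.injective, Function.comp_apply]

theorem commute_lieAct_onValues (X : Matrix κ κ R) (D : Module.End R M) :
    Commute (lieAct (ι := ι) X) (onValues D) := by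
  refine LinearMap.ext fun t => funext fun i => ?_
  simp only [Module.End.mul_apply, onValues_apply, lieAct_apply, map_sum, map_smul]

/-- The action of a matrix on tensors, simultaneously on all slots. -/
def tensorPower (X : Matrix κ κ R) : Module.End R ((ι → κ) → M) where
  toFun t i := ∑ i' : ι → κ, (∏ a, X (i a) (i' a)) • t i'
  map_add' s t := by
    funext i
    simp only [Pi.add_apply, smul_add, Finset.sum_add_distrib]
  map_smul' c t := by
    funext i
    simp only [Pi.smul_apply, RingHom.id_apply, Finset.smul_sum, smul_comm c]

theorem tensorPower_apply (X : Matrix κ κ R) (t : (ι → κ) → M) (i : ι → κ) :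
    tensorPower X t i = ∑ i' : ι → κ, (∏ a, X (i a) (i' a)) • t i' := rfl

end MatrixAction

section MatrixUnits

variable [DecidableEq ι] [Fintype κ] [DecidableEq κ]

theorem atSlot_single_apply (a : ι) (p q : κ) (t : (ι → κ) → M) (i : ι → κ) :
    atSlot a (Matrix.single p q (1 : R)) t i =
      if i a = p then t (Function.update i a q) else 0 := by
  simp [atSlot_apply, Matrix.single_apply, ite_and, eq_comm]

theorem sum_atSlot_single_mul_atSlot_single_self (a : ι) :
    ∑ p, ∑ q, atSlot a (Matrix.single p q (1 : R)) * atSlot a (Matrix.single q p 1) =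
      Fintype.card κ • (1 : Module.End R ((ι → κ) → M)) := by
  ext t i
  simp [Finset.sum_apply, atSlot_single_apply]

theorem sum_atSlot_single_mul_atSlot_single_of_ne {a c : ι} (h : a ≠ c) :
    ∑ p, ∑ q, atSlot a (Matrix.single p q (1 : R)) * atSlot c (Matrix.single q p 1) =
      permSlots (κ := κ) (M := M) (Equiv.swap a c) := by
  ext t i
  simp [Finset.sum_apply, atSlot_single_apply, permSlots_apply, Equiv.comp_swap_eq_update,
    Function.update_of_ne h.symm, Function.update_comm h]

theorem sum_lieAct_single_mul_lieAct_single [Fintype ι] :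
    ∑ p : κ, ∑ q : κ, lieAct (Matrix.single p q (1 : R)) * lieAct (Matrix.single q p 1) =
      (Fintype.card κ * Fintype.card ι) • (1 : Module.End R ((ι → κ) → M)) +
        ∑ x ∈ Finset.univ.offDiag, permSlots (Equiv.swap x.1 x.2) := by
  simp only [lieAct, Finset.sum_mul_sum]
  rw [Finset.sum_congr rfl fun p _ => Finset.sum_comm.trans
      (Finset.sum_congr rfl fun a _ => Finset.sum_comm), Finset.sum_comm,
    Finset.sum_congr rfl fun a _ => Finset.sum_comm, ← sum_diag_add_sum_offDiag]
  congr 1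
  · simp only [sum_atSlot_single_mul_atSlot_single_self, Finset.sum_const, Finset.card_univ,
      smul_smul, mul_comm]
  · exact Finset.sum_congr rfl fun x hx =>
      sum_atSlot_single_mul_atSlot_single_of_ne (Finset.mem_offDiag.1 hx).2.2

end MatrixUnits

section TensorProduct

variable {α β M₁ M₂ : Type*} [AddCommGroup M₁] [Module R M₁] [AddCommGroup M₂] [Module R M₂]

/-- The tensor product of tensors with slots `α` and `β` as a tensor with slots `ι ≃ α ⊕ β`, the
components being multiplied by the bilinear map `B`. -/
def outer (e : α ⊕ β ≃ ι) (B : M₁ →ₗ[R] M₂ →ₗ[R] M) :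
    ((α → κ) → M₁) →ₗ[R] ((β → κ) → M₂) →ₗ[R] (ι → κ) → M :=
  LinearMap.mk₂ R (fun s t i => B (s (i ∘ e ∘ Sum.inl)) (t (i ∘ e ∘ Sum.inr)))
    (fun _ _ _ => by ext; simp) (fun _ _ _ => by ext; simp)
    (fun _ _ _ => by ext; simp) (fun _ _ _ => by ext; simp)

variable (e : α ⊕ β ≃ ι) {B : M₁ →ₗ[R] M₂ →ₗ[R] M} (s : (α → κ) → M₁) (t : (β → κ) → M₂)

theorem outer_apply (i : ι → κ) :
    outer e B s t i = B (s (i ∘ e ∘ Sum.inl)) (t (i ∘ e ∘ Sum.inr)) := rfl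

theorem onValues_outer {D : Module.End R M} {D₁ : Module.End R M₁} {D₂ : Module.End R M₂}
    (hB : ∀ x y, D (B x y) = B (D₁ x) y + B x (D₂ y)) :
    onValues D (outer e B s t) =
      outer e B (onValues D₁ s) t + outer e B s (onValues D₂ t) :=
  funext fun _ => hB _ _

variable [Fintype ι] [DecidableEq ι] [Fintype α] [DecidableEq α] [Fintype β] [DecidableEq β]
  [Fintype κ]

theorem lieAct_outer (X : Matrix κ κ R) :
    lieAct X (outer e B s t) = outer e B (lieAct X s) t + outer e B s (lieAct X t) := by
  have update_inl (i : ι → κ) (a : α) (k : κ) :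
      Function.update i (e (Sum.inl a)) k ∘ e ∘ Sum.inl =
        Function.update (i ∘ e ∘ Sum.inl) a k :=
    Function.update_comp_eq_of_injective i (e.injective.comp Sum.inl_injective) a k
  have update_inl_inr (i : ι → κ) (a : α) (k : κ) :
      Function.update i (e (Sum.inl a)) k ∘ e ∘ Sum.inr = i ∘ e ∘ Sum.inr :=
    Function.update_comp_eq_of_forall_ne i k (by simp)
  have update_inr (i : ι → κ) (b : β) (k : κ) :
      Function.update i (e (Sum.inr b)) k ∘ e ∘ Sum.inr =
        Function.update (i ∘ e ∘ Sum.inr) b k :=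
    Function.update_comp_eq_of_injective i (e.injective.comp Sum.inr_injective) b k
  have update_inr_inl (i : ι → κ) (b : β) (k : κ) :
      Function.update i (e (Sum.inr b)) k ∘ e ∘ Sum.inl = i ∘ e ∘ Sum.inl :=
    Function.update_comp_eq_of_forall_ne i k (by simp)
  funext i
  rw [lieAct_apply, ← Equiv.sum_comp e, Fintype.sum_sum_type]
  simp only [Pi.add_apply, outer_apply, lieAct_apply, update_inl, update_inl_inr, update_inr,
    update_inr_inl, map_sum, map_smul, LinearMap.sum_apply, LinearMap.smul_apply,
    Function.comp_apply]

end TensorProduct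

end SlotOperators

section Differential

variable {ι κ : Type*} [Fintype ι] [DecidableEq ι] [Fintype κ] [DecidableEq κ]

theorem tensorPower_one {R M : Type*} [CommRing R] [AddCommGroup M] [Module R M] :
    tensorPower (1 : Matrix κ κ R) = (1 : Module.End R ((ι → κ) → M)) := by
  ext t i
  simp [tensorPower_apply, Matrix.one_apply, Finset.prod_ite_zero, ← funext_iff]

theorem sum_prod_erase_one_smul {R M : Type*} [CommRing R] [AddCommGroup M] [Module R M]
    (a : ι) (i : ι → κ) (F : (ι → κ) → M) :
    ∑ i' : ι → κ, (∏ b ∈ Finset.univ.erase a, (1 : Matrix κ κ R) (i b) (i' b)) • F i' =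
      ∑ k, F (Function.update i a k) := by
  refine (Finset.sum_of_injOn (Function.update i a) (Function.update_injective i a).injOn
    (fun _ _ => Finset.mem_univ _) (fun i' _ hi' => ?_) fun k _ => ?_).symm
  · obtain ⟨b, hb, hne⟩ : ∃ b, b ≠ a ∧ i b ≠ i' b := by
      by_contra! h
      exact hi' ⟨i' a, by simp, Function.update_eq_iff.2 ⟨rfl, h⟩⟩
    have hprod : ∏ b ∈ Finset.univ.erase a, (1 : Matrix κ κ R) (i b) (i' b) = 0 :=
      Finset.prod_eq_zero (Finset.mem_erase.2 ⟨hb, Finset.mem_univ b⟩) (Matrix.one_apply_ne hne)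
    rw [hprod, zero_smul]
  · rw [Finset.prod_eq_one fun b hb => ?_, one_smul]
    rw [Function.update_of_ne (Finset.ne_of_mem_erase hb), Matrix.one_apply_eq]

theorem hasDerivAt_tensorPower {𝕜 M : Type*} [NontriviallyNormedField 𝕜] [NormedAddCommGroup M]
    [NormedSpace 𝕜 M] {X : 𝕜 → Matrix κ κ 𝕜} {X' : Matrix κ κ 𝕜} {F : 𝕜 → (ι → κ) → M}
    {F' : (ι → κ) → M} {s₀ : 𝕜} (hX : HasDerivAt X X' s₀) (hX₀ : X s₀ = 1)
    (hF : HasDerivAt F F' s₀) :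
    HasDerivAt (fun s => tensorPower (X s) (F s)) (lieAct X' (F s₀) + F') s₀ := by
  have hentry (x y : κ) : HasDerivAt (fun s => X s x y) (X' x y) s₀ :=
    hasDerivAt_pi.1 (hasDerivAt_pi.1 hX x) y
  refine hasDerivAt_pi.2 fun i => ?_
  have hsum := HasDerivAt.fun_sum (u := Finset.univ) fun (i' : ι → κ) _ =>
    (HasDerivAt.fun_finsetProd fun a (_ : a ∈ Finset.univ) => hentry (i a) (i' a)).smul
      (hasDerivAt_pi.1 hF i')
  refine hsum.congr_deriv ?_
  rw [Finset.sum_add_distrib, add_comm, Pi.add_apply]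
  congr 1
  · simp only [hX₀, Finset.sum_smul, smul_assoc]
    rw [Finset.sum_comm, lieAct_apply]
    simp only [sum_prod_erase_one_smul, Function.update_self]
  · rw [hX₀, ← tensorPower_apply, tensorPower_one, Module.End.one_apply]

theorem hasDerivAt_matrix_exp_smul (X : Matrix κ κ ℂ) :
    HasDerivAt (fun s : ℂ => NormedSpace.exp (s • X)) X 0 := by
  open scoped Matrix.Norms.Operator in
  have h := hasDerivAt_exp_smul_const X (0 : ℂ)
  simp only [zero_smul, NormedSpace.exp_zero, one_mul] at h
  exact h

end Differential

theorem sub_mul_sub_of_commute {R : Type*} [Ring R] {a b c d : R} (h : Commute c b) :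
    (a - b) * (c - d) = a * c + b * d - a * d - c * b := by
  rw [h.eq]
  noncomm_ring

section MixedTensors

variable {N m n : ℕ}

/-- The representation of `𝔖ₙ` on mixed tensors that permutes the covariant slots. -/
def permLower (N m n : ℕ) : Equiv.Perm (Fin n) →* Module.End ℂ (Tens N m n) where
  toFun := permD N m n
  map_one' := rfl
  map_mul' _ _ := rfl

theorem permLower_apply (q : Equiv.Perm (Fin n)) :
    permLower N m n q = onValues (permSlots q) := rfl

theorem ySymU_eq_youngSymmetrizer (f : Fin m → ℕ × ℕ) :
    ySymU N m n f = youngSymmetrizer permSlots f := by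
  rw [youngSymmetrizer_eq_sum (K := ℂ)]
  rfl

theorem ySymD_eq_youngSymmetrizer (f : Fin n → ℕ × ℕ) :
    ySymD N m n f = youngSymmetrizer (permLower N m n) f :=
  (youngSymmetrizer_eq_sum (K := ℂ) (permLower N m n) f).symm

theorem LOp_eq_transpositionSum : LOp N m n = transpositionSum permSlots := rfl

theorem ROp_eq_transpositionSum : ROp N m n = transpositionSum (permLower N m n) := rfl

theorem ROp_eq_onValues : ROp N m n = onValues (transpositionSum permSlots) := by
  simp only [ROp_eq_transpositionSum, transpositionSum, map_sum, permLower_apply]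

/-- The action of a matrix of `𝔤𝔩_N` on mixed tensors, the contravariant slots carrying the
standard representation and the covariant ones its dual. -/
def mixedLieAct (m n : ℕ) (X : Matrix (Fin N) (Fin N) ℂ) : Module.End ℂ (Tens N m n) :=
  lieAct X - onValues (lieAct X.transpose)

/-- The quadratic Casimir operator `∑ E_pq E_qp` of `𝔤𝔩_N` on mixed tensors. -/
def glCasimir (N m n : ℕ) : Module.End ℂ (Tens N m n) :=
  ∑ p : Fin N, ∑ q : Fin N,
    mixedLieAct m n (Matrix.single p q 1) * mixedLieAct m n (Matrix.single q p 1)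

/-- The operator `𝒞_{m,n} = ℒ_m + ℛ_n − 𝒜_{m,n} + Nn`. -/
def mixedCasimir (N m n : ℕ) : Module.End ℂ (Tens N m n) :=
  LOp N m n + ROp N m n - A N m n + ((N * n : ℕ) : ℂ) • 1

section CasimirFormula

theorem tauC_eq_sum_atSlot (a : Fin m) (b : Fin n) :
    tauC N m n a b = ∑ p : Fin N, ∑ q : Fin N,
      atSlot a (Matrix.single p q (1 : ℂ)) * onValues (atSlot b (Matrix.single p q (1 : ℂ))) := by
  ext t i j
  simp [tauC, Finset.sum_apply, atSlot_single_apply, onValues_apply, ite_apply, eq_comm]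

theorem A_eq_sum_lieAct :
    A N m n = ∑ p : Fin N, ∑ q : Fin N,
      lieAct (Matrix.single p q (1 : ℂ)) * onValues (lieAct (Matrix.single p q (1 : ℂ))) := by
  simp only [A, tauC_eq_sum_atSlot, lieAct, map_sum, Finset.sum_mul_sum]
  rw [Finset.sum_congr rfl fun a _ => Finset.sum_comm.trans
      (Finset.sum_congr rfl fun p _ => Finset.sum_comm), Finset.sum_comm,
    Finset.sum_congr rfl fun p _ => Finset.sum_comm]

theorem sum_lieAct_mul_lieAct_eq_LOp :
    ∑ p : Fin N, ∑ q : Fin N,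
      lieAct (Matrix.single p q (1 : ℂ)) * lieAct (Matrix.single q p 1) =
        (N * m) • (1 : Module.End ℂ (Tens N m n)) + 2 • LOp N m n := by
  rw [sum_lieAct_single_mul_lieAct_single, sum_offDiag_swap, LOp_eq_transpositionSum,
    Fintype.card_fin, Fintype.card_fin]

theorem sum_onValues_lieAct_mul_lieAct_eq_ROp :
    ∑ p : Fin N, ∑ q : Fin N,
      onValues (lieAct (Matrix.single p q (1 : ℂ)) * lieAct (Matrix.single q p 1)) =
        (N * n) • (1 : Module.End ℂ (Tens N m n)) + 2 • ROp N m n := by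
  simp only [← map_sum]
  rw [sum_lieAct_single_mul_lieAct_single, sum_offDiag_swap, ROp_eq_onValues, map_add, map_nsmul,
    map_nsmul, map_one, Fintype.card_fin, Fintype.card_fin]

theorem glCasimir_eq :
    glCasimir N m n = (N * m) • (1 : Module.End ℂ (Tens N m n)) + 2 • LOp N m n +
      ((N * n) • 1 + 2 • ROp N m n) - 2 • A N m n := by
  have expand (p q : Fin N) :
      mixedLieAct m n (Matrix.single p q 1) * mixedLieAct m n (Matrix.single q p 1) =
        lieAct (Matrix.single p q 1) * lieAct (Matrix.single q p 1) +
        onValues (lieAct (Matrix.single q p 1) * lieAct (Matrix.single p q 1)) -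
        lieAct (Matrix.single p q 1) * onValues (lieAct (Matrix.single p q 1)) -
        lieAct (Matrix.single q p 1) * onValues (lieAct (Matrix.single q p 1)) := by
    simp only [mixedLieAct, Matrix.transpose_single, map_mul]
    exact sub_mul_sub_of_commute (commute_lieAct_onValues (Matrix.single q p (1 : ℂ)) _)
  simp only [glCasimir, expand, Finset.sum_sub_distrib, Finset.sum_add_distrib]
  rw [sum_lieAct_mul_lieAct_eq_LOp, ← A_eq_sum_lieAct, Finset.sum_comm,
    sum_onValues_lieAct_mul_lieAct_eq_ROp, Finset.sum_comm, ← A_eq_sum_lieAct]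
  abel

theorem mixedCasimir_eq_glCasimir :
    mixedCasimir N m n = (2 : ℂ)⁻¹ • (glCasimir N m n - ((N : ℂ) * (m - n)) • 1) := by
  rw [glCasimir_eq, mixedCasimir]
  simp only [← Nat.cast_smul_eq_nsmul ℂ]
  push_cast
  module

end CasimirFormula

section Centralizer

open NormedSpace (exp)

theorem glAct_eq_tensorPower (g : GL (Fin N) ℂ) (t : Tens N m n) :
    glAct N m n g t = tensorPower (g : Matrix (Fin N) (Fin N) ℂ)
      (onValues (tensorPower ((g⁻¹ : GL (Fin N) ℂ) : Matrix (Fin N) (Fin N) ℂ).transpose) t) := by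
  funext i j
  simp [glAct, tensorPower_apply, onValues_apply, Finset.sum_apply, Finset.mul_sum, mul_assoc]

theorem hasDerivAt_glAct_exp (X : Matrix (Fin N) (Fin N) ℂ) (t : Tens N m n) :
    HasDerivAt (fun s : ℂ => glAct N m n (Matrix.isUnit_exp (s • X)).unit t)
      (mixedLieAct m n X t) 0 := by
  have hinv (s : ℂ) : (((Matrix.isUnit_exp (s • X)).unit⁻¹ : GL (Fin N) ℂ) :
      Matrix (Fin N) (Fin N) ℂ).transpose = exp (s • -X.transpose) := by
    rw [Matrix.coe_units_inv, IsUnit.unit_spec, ← Matrix.exp_neg, ← Matrix.exp_transpose,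
      Matrix.transpose_neg, Matrix.transpose_smul, smul_neg]
  simp only [glAct_eq_tensorPower, hinv, IsUnit.unit_spec]
  have hlower : HasDerivAt (fun s : ℂ => onValues (tensorPower (exp (s • -X.transpose))) t)
      (onValues (lieAct (-X.transpose)) t) 0 := by
    refine hasDerivAt_pi.2 fun i => ?_
    exact (hasDerivAt_tensorPower (hasDerivAt_matrix_exp_smul (-X.transpose)) (by simp)
      (hasDerivAt_const 0 (t i))).congr_deriv (add_zero _)
  refine (hasDerivAt_tensorPower (hasDerivAt_matrix_exp_smul X) (by simp) hlower).congr_deriv ?_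
  simp [tensorPower_one, mixedLieAct, lieAct_neg, sub_eq_add_neg]

variable {f : Module.End ℂ (Tens N m n)}

theorem commute_mixedLieAct_of_mem_Cent (hf : f ∈ Cent N m n) (X : Matrix (Fin N) (Fin N) ℂ) :
    Commute f (mixedLieAct m n X) := by
  refine LinearMap.ext fun t => ?_
  have hderiv := (LinearMap.toContinuousLinearMap f).hasFDerivAt.comp_hasDerivAt (0 : ℂ)
    (hasDerivAt_glAct_exp X t)
  refine hderiv.unique ((hasDerivAt_glAct_exp X (f t)).congr_of_eventuallyEq ?_)
  refine Filter.Eventually.of_forall fun s => ?_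
  have hcomm := (Subalgebra.mem_centralizer_iff ℂ).1 hf _ ⟨(Matrix.isUnit_exp (s • X)).unit, rfl⟩
  exact (LinearMap.congr_fun hcomm t).symm

theorem commute_mixedCasimir_of_mem_Cent (hf : f ∈ Cent N m n) :
    Commute f (mixedCasimir N m n) := by
  have hgl : Commute f (glCasimir N m n) :=
    Commute.sum_right _ _ _ fun p _ => Commute.sum_right _ _ _ fun q _ =>
      (commute_mixedLieAct_of_mem_Cent hf _).mul_right (commute_mixedLieAct_of_mem_Cent hf _)
  rw [mixedCasimir_eq_glCasimir]
  exact (hgl.sub_right ((Commute.one_right f).smul_right _)).smul_right _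

end Centralizer

section IdentityTensor

/-- The invariant tensor `E^{⊗r}`, where `E = ∑ eᵢ ⊗ eⁱ`. -/
def idTensor (N r : ℕ) : Tens N r r := fun i j => if i = j then 1 else 0

theorem mixedLieAct_idTensor {r : ℕ} (X : Matrix (Fin N) (Fin N) ℂ) :
    mixedLieAct r r X (idTensor N r) = 0 := by
  funext i j
  have hslot (a : Fin r) :
      ∑ k, X (i a) k • idTensor N r (Function.update i a k) j =
        ∑ k, X k (j a) • idTensor N r i (Function.update j a k) := by
    simp [idTensor, Function.update_eq_iff, Function.eq_update_iff, ite_and]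
  simp only [mixedLieAct, LinearMap.sub_apply, Pi.sub_apply, Pi.zero_apply, lieAct_apply,
    onValues_apply, Finset.sum_apply, Pi.smul_apply, Matrix.transpose_apply, hslot, sub_self]

/-- The first `m - r` and the last `r` of `m` slots. -/
def splitSlots {r : ℕ} (hrm : r ≤ m) : Fin (m - r) ⊕ Fin r ≃ Fin m :=
  finSumFinEquiv.trans (finCongr (Nat.sub_add_cancel hrm))

variable {r : ℕ} (hrm : r ≤ m) (hrn : r ≤ n) (t : Tens N (m - r) (n - r))

theorem embE_eq_outer :
    embE N m n r hrm hrn t =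
      outer (splitSlots hrm) (outer (splitSlots hrn) (LinearMap.mul ℂ ℂ)) t (idTensor N r) := by
  funext i j
  rw [outer_apply, outer_apply, LinearMap.mul_apply', mul_comm, idTensor, embE]
  simp only [LinearMap.coe_mk, AddHom.coe_mk, Finset.prod_ite_zero, funext_iff,
    Finset.prod_const_one, Finset.mem_univ, true_imp_iff]
  rfl

theorem mixedLieAct_embE (X : Matrix (Fin N) (Fin N) ℂ) :
    mixedLieAct m n X (embE N m n r hrm hrn t) =
      embE N m n r hrm hrn (mixedLieAct (m - r) (n - r) X t) := by
  have leibniz (s : Tens N r r) :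
      mixedLieAct m n X
          (outer (splitSlots hrm) (outer (splitSlots hrn) (LinearMap.mul ℂ ℂ)) t s) =
        outer (splitSlots hrm) (outer (splitSlots hrn) (LinearMap.mul ℂ ℂ))
            (mixedLieAct (m - r) (n - r) X t) s +
          outer (splitSlots hrm) (outer (splitSlots hrn) (LinearMap.mul ℂ ℂ))
            t (mixedLieAct r r X s) := by
    simp only [mixedLieAct, LinearMap.sub_apply, map_sub]
    rw [lieAct_outer, onValues_outer _ _ _ fun x y => lieAct_outer (splitSlots hrn) x y X.transpose]
    abel
  rw [embE_eq_outer, embE_eq_outer, leibniz, mixedLieAct_idTensor, map_zero, add_zero]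

theorem glCasimir_embE :
    glCasimir N m n (embE N m n r hrm hrn t) =
      embE N m n r hrm hrn (glCasimir N (m - r) (n - r) t) := by
  simp only [glCasimir, LinearMap.sum_apply, Module.End.mul_apply, map_sum, mixedLieAct_embE]

theorem mixedCasimir_embE :
    mixedCasimir N m n (embE N m n r hrm hrn t) =
      embE N m n r hrm hrn (mixedCasimir N (m - r) (n - r) t) := by
  simp only [mixedCasimir_eq_glCasimir, LinearMap.smul_apply, LinearMap.sub_apply,
    Module.End.one_apply, map_smul, map_sub, glCasimir_embE, Nat.cast_sub hrm, Nat.cast_sub hrn,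
    sub_sub_sub_cancel_right]

end IdentityTensor

section Traceless

theorem A_apply_of_mem_traceless0 {t : Tens N m n} (ht : t ∈ traceless0 N m n) : A N m n t = 0 := by
  simp only [traceless0, Submodule.mem_iInf, LinearMap.mem_ker] at ht
  simp only [A, LinearMap.sum_apply]
  refine Finset.sum_eq_zero fun a _ => Finset.sum_eq_zero fun b _ => funext₂ fun i j => ?_
  exact (congrArg (ite _ · 0) (congrFun₂ (ht a b) i j)).trans (ite_self 0)

theorem commute_A_permSlots (p : Equiv.Perm (Fin m)) : Commute (A N m n) (permSlots p) := by
  rw [A_eq_sum_lieAct]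
  exact Commute.sum_left _ _ _ fun _ _ => Commute.sum_left _ _ _ fun _ _ =>
    (commute_lieAct_permSlots _ p).mul_left (commute_permSlots_onValues p _).symm

theorem commute_A_permLower (q : Equiv.Perm (Fin n)) : Commute (A N m n) (permLower N m n q) := by
  rw [A_eq_sum_lieAct, permLower_apply]
  exact Commute.sum_left _ _ _ fun _ _ => Commute.sum_left _ _ _ fun _ _ =>
    (commute_lieAct_onValues _ _).mul_left ((commute_lieAct_permSlots _ q).map onValues)

theorem commute_ROp_permSlots (p : Equiv.Perm (Fin m)) : Commute (ROp N m n) (permSlots p) := by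
  rw [ROp_eq_onValues]
  exact (commute_permSlots_onValues p _).symm

variable {μ ν : YoungDiagram} {fμ : Fin m → ℕ × ℕ} {fν : Fin n → ℕ × ℕ}

theorem LOp_mul_ySymU (hμ : IsTableau m μ fμ) :
    LOp N m n * ySymU N m n fμ = content μ • ySymU N m n fμ := by
  have : IsAddTorsionFree (Module.End ℂ (Tens N m n)) := .of_isTorsionFree ℂ _
  rw [ySymU_eq_youngSymmetrizer, LOp_eq_transpositionSum]
  exact hμ.transpositionSum_mul_youngSymmetrizer (R := Module.End ℂ (Tens N m n)) permSlots

theorem ROp_mul_ySymD (hν : IsTableau n ν fν) :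
    ROp N m n * ySymD N m n fν = content ν • ySymD N m n fν := by
  have : IsAddTorsionFree (Module.End ℂ (Tens N m n)) := .of_isTorsionFree ℂ _
  rw [ySymD_eq_youngSymmetrizer, ROp_eq_transpositionSum]
  exact hν.transpositionSum_mul_youngSymmetrizer (permLower N m n)

theorem mixedCasimir_ySymU_ySymD (hμ : IsTableau m μ fμ) (hν : IsTableau n ν fν)
    {t : Tens N m n} (ht : t ∈ traceless0 N m n) :
    mixedCasimir N m n (ySymU N m n fμ (ySymD N m n fν t)) =
      (((content μ + content ν : ℤ) : ℂ) + N * n) • ySymU N m n fμ (ySymD N m n fν t) := by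
  have commA_U : Commute (A N m n) (ySymU N m n fμ) := by
    rw [ySymU_eq_youngSymmetrizer]
    exact commute_youngSymmetrizer commute_A_permSlots fμ
  have commA_D : Commute (A N m n) (ySymD N m n fν) := by
    rw [ySymD_eq_youngSymmetrizer]
    exact commute_youngSymmetrizer commute_A_permLower fν
  have commR_U : Commute (ROp N m n) (ySymU N m n fμ) := by
    rw [ySymU_eq_youngSymmetrizer]
    exact commute_youngSymmetrizer commute_ROp_permSlots fμ
  have hA : A N m n (ySymU N m n fμ (ySymD N m n fν t)) = 0 := by
    have h := LinearMap.congr_fun (commA_U.mul_right commA_D).eq t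
    simpa only [Module.End.mul_apply, A_apply_of_mem_traceless0 ht, map_zero] using h
  have hL : LOp N m n (ySymU N m n fμ (ySymD N m n fν t)) =
      content μ • ySymU N m n fμ (ySymD N m n fν t) :=
    LinearMap.congr_fun (LOp_mul_ySymU hμ) _
  have hR : ROp N m n (ySymU N m n fμ (ySymD N m n fν t)) =
      content ν • ySymU N m n fμ (ySymD N m n fν t) := by
    have h : ROp N m n * (ySymU N m n fμ * ySymD N m n fν) =
        content ν • (ySymU N m n fμ * ySymD N m n fν) := by
      rw [← mul_assoc, commR_U.eq, mul_assoc, ROp_mul_ySymD hν, mul_smul_comm]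
    exact LinearMap.congr_fun h t
  simp only [mixedCasimir, LinearMap.add_apply, LinearMap.sub_apply, LinearMap.smul_apply,
    Module.End.one_apply, hA, hL, hR, ← Int.cast_smul_eq_zsmul ℂ]
  push_cast
  module

end Traceless

theorem glIsoComp_le_eigenspace {r : ℕ} (hrm : r ≤ m) (hrn : r ≤ n) (μ ν : YoungDiagram) :
    glIsoComp N m n r hrm hrn μ ν ≤ Module.End.eigenspace (mixedCasimir N m n)
      (((content μ + content ν : ℤ) : ℂ) + N * ν.card) := by
  refine Submodule.span_le.2 ?_
  rintro _ ⟨f, hf, fμ, fν, hμ, hν, t, ht, rfl⟩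
  refine Module.End.mem_eigenspace_iff.2 ?_
  have hcomm := LinearMap.congr_fun (commute_mixedCasimir_of_mem_Cent hf).eq
  simp only [Module.End.mul_apply] at hcomm
  rw [← hcomm, mixedCasimir_embE, mixedCasimir_ySymU_ySymD hμ hν ht, map_smul, map_smul,
    hν.card_eq]

end MixedTensors

end Mixed

/-- the operator 𝒞_{m,n} = ℒ_m + ℛ_n − 𝒜_{m,n} + N·n acts on the
isotypic GL(N)-component of V^{m,n} labelled by (μ,ν) ∈ Λ_{m,n}(N)
(with m − |μ| = n − |ν| = r and ℓ(μ) + ℓ(ν) ≤ N) as the scalar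
c(μ) + c(ν) + N·|ν|. -/
theorem Casimir_scalar_on_isotypic (N m n r : ℕ) (hm : 1 ≤ m) (hn : 1 ≤ n)
    (hrm : r ≤ m) (hrn : r ≤ n) (μ ν : YoungDiagram)
    (hμ : μ.card = m - r) (hν : ν.card = n - r)
    (hrows : Mixed.nrows μ + Mixed.nrows ν ≤ N)
    (T : Tens N m n) (hT : T ∈ Mixed.glIsoComp N m n r hrm hrn μ ν) :
    (Mixed.LOp N m n + Mixed.ROp N m n - Mixed.A N m n
        + ((N * n : ℕ) : ℂ) • (1 : Module.End ℂ (Tens N m n))) T =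
      (((Mixed.content μ + Mixed.content ν : ℤ) : ℂ) + (N : ℂ) * (ν.card : ℂ)) • T :=
  Module.End.mem_eigenspace_iff.1 (Mixed.glIsoComp_le_eigenspace hrm hrn μ ν hT)
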